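/- For all natural numbers n, k with n ≤ k, the following identity of formal power series over ℤ holds: (1 + X)^n = (1 - X)^{k+1} · Σ_{m≥0} C(m + (k - n), n, k) · X^m. Equivalently, (1+x)^n/(1-x)^{k+1} = Σ_{m≥0} C(m+k-n, n, k) x^m. -/

import Mathlib

open Finset

/-- The set of ternary words of length `m + n` (as functions `Fin (m+n) → Fin 3`)
having exactly `k` letters equal to `2` and no letter equal to `0` among the
first `m` letters. -/
def ternaryWords (m n k : ℕ) : Finset (Fin (m + n) → Fin 3) :=
  univ.filter fun w =>
    (univ.filter fun i => w i = 2).card = k ∧ ∀ i : Fin (m + n), (i : ℕ) < m → w i ≠ 0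

/-- `C m n k` is the number of ternary words of length `m + n` with exactly `k`
twos and no zero among the first `m` letters; it equals the inset number
`{m,n choose k}` of Janjić–Petković. -/
def C (m n k : ℕ) : ℕ := (ternaryWords m n k).card

theorem C_eq_coeff (m n k : ℕ) :
    (C m n k : ℤ) =
      (((1 + Polynomial.X) ^ m * (2 + Polynomial.X) ^ n : Polynomial ℤ)).coeff k := by
  have h := Finset.prod_univ_sum
    (fun i : Fin (m + n) => if (i : ℕ) < m then ({1, 2} : Finset (Fin 3)) else univ)
    (fun _ j => if j = 2 then (Polynomial.X : Polynomial ℤ) else 1)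
  have hl : (∏ i : Fin (m + n), ∑ j ∈
      (if (i : ℕ) < m then ({1, 2} : Finset (Fin 3)) else univ),
      (if j = 2 then (Polynomial.X : Polynomial ℤ) else 1)) =
      (1 + Polynomial.X) ^ m * (2 + Polynomial.X) ^ n := by
    rw [Fin.prod_univ_add]
    have h1 : ∑ j ∈ ({1, 2} : Finset (Fin 3)),
        (if j = 2 then (Polynomial.X : Polynomial ℤ) else 1) = 1 + Polynomial.X := by
      rw [Finset.sum_pair (by decide)]
      simp
    have h2 : ∑ j : Fin 3,
        (if j = 2 then (Polynomial.X : Polynomial ℤ) else 1) = 2 + Polynomial.X := by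
      rw [Fin.sum_univ_three]
      simp
      norm_num
    simp [h1, h2]
  rw [← hl, h, Polynomial.finsetSum_coeff]
  have h3 : ∀ p : Fin (m + n) → Fin 3,
      (∏ x, if p x = 2 then (Polynomial.X : Polynomial ℤ) else 1).coeff k =
        if (univ.filter fun i => p i = 2).card = k then 1 else 0 := by
    intro p
    rw [← Finset.prod_filter, Finset.prod_const, Polynomial.coeff_X_pow]
    simp only [eq_comm]
  simp only [h3]
  rw [← Finset.sum_filter, Finset.sum_const, nsmul_eq_mul, mul_one, C]
  congr 2
  ext w
  simp only [ternaryWords, mem_filter, mem_univ, true_and, Fintype.mem_piFinset]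
  rw [and_comm]
  refine and_congr_left' (forall_congr' fun i => ?_)
  by_cases hi : (i : ℕ) < m
  · simp only [hi, if_true, true_imp_iff]
    generalize w i = a
    revert a
    decide
  · simp [hi]

theorem C_rec (m n k : ℕ) : (C m (n + 1) k : ℤ) = C m n k + C (m + 1) n k := by
  simp only [C_eq_coeff]
  rw [← Polynomial.coeff_add]
  congr 1
  ring

theorem C_zero (m k : ℕ) : C m 0 k = m.choose k := by
  have h := C_eq_coeff m 0 k
  rw [pow_zero, mul_one, Polynomial.coeff_one_add_X_pow] at h
  exact_mod_cast h

theorem C_small (m n k : ℕ) (h : m + n < k) : C m n k = 0 := by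
  rw [C, Finset.card_eq_zero, ternaryWords, Finset.filter_eq_empty_iff]
  rintro w - ⟨h1, -⟩
  have := Finset.card_le_univ (univ.filter fun i => w i = 2)
  rw [Fintype.card_fin] at this
  omega

theorem stmt_15 (n k : ℕ) (h : n ≤ k) :
    (1 + PowerSeries.X : PowerSeries ℤ) ^ n =
      (1 - PowerSeries.X) ^ (k + 1) *
        PowerSeries.mk (fun m => (C (m + (k - n)) n k : ℤ)) := by
  induction n with
  | zero =>
    have := PowerSeries.mk_add_choose_mul_one_sub_pow_eq_one ℤ k
    rw [pow_zero, mul_comm]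
    refine this.symm.trans ?_
    have e : (fun m => (C (m + (k - 0)) 0 k : ℤ)) = fun m => (((k + m).choose k : ℕ) : ℤ) := by
      funext m
      rw [C_zero, Nat.sub_zero, add_comm]
    rw [e]
  | succ n ih =>
    rw [pow_succ, ih (by omega), mul_assoc]
    congr 1
    ext m
    rw [mul_add, mul_one, map_add, PowerSeries.coeff_mk, PowerSeries.coeff_mk, C_rec]
    have e : m + (k - (n + 1)) + 1 = m + (k - n) := by omega
    rw [e, add_comm]
    congr 1
    cases m with
    | zero =>
      rw [PowerSeries.coeff_zero_mul_X, C_small _ _ _ (by omega)]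
      rfl
    | succ m =>
      rw [PowerSeries.coeff_succ_mul_X, PowerSeries.coeff_mk]
      congr 2
      omega
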